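/- arXiv:1703.08830 — 7 statements merged into one kernel-verified Lean document; each statement's English description precedes it below -/
import Mathlib

section
/- Let m be a positive integer and let (α|β) be a pair of compositions with |α| + |β| = n. Then in the ring Γ^(m) of m'-truncated symmetric functions we have h_α e_β = ∑ c^(m)_{β;(ξ,mμ)} h_{α∪ξ} e_{mμ}, where the sum runs over all pairs (ξ, μ) of partitions with |α| + |ξ| + m|μ| = n, and where e_{mμ} = e_{mμ_1}···e_{mμ_{ℓ(μ)}}. -/
noncomputable section

open MvPolynomial

/-- The polynomial ring `ℤ[h_1, h_2, …, e_1, e_2, …]`: `Sum.inl i` is `h_i`, `Sum.inr j` is `e_j`. -/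
abbrev SymR : Type := MvPolynomial (ℕ ⊕ ℕ) ℤ

/-- `h_i`, with the convention `h_0 = 1`. -/
def Hh (i : ℕ) : SymR := if i = 0 then 1 else X (Sum.inl i)

/-- `e_j`, with the convention `e_0 = 1`. -/
def Ee (j : ℕ) : SymR := if j = 0 then 1 else X (Sum.inr j)

/-- `∑_{i=0}^d (-1)^i h_i e_{d-i}`. -/
def truncRel (d : ℕ) : SymR := ∑ i ∈ Finset.range (d + 1), (-1 : SymR) ^ i * Hh i * Ee (d - i)

/-- The ideal generated by `∑_{i=0}^d (-1)^i h_i e_{d-i}` for all `d ≥ 1` with `m ∤ d`. -/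
def truncIdeal (m : ℕ) : Ideal SymR := Ideal.span {f | ∃ d : ℕ, 0 < d ∧ ¬ m ∣ d ∧ f = truncRel d}

/-- The `m`'-truncated ring `Γ^(m)`. -/
abbrev Gamma (m : ℕ) := SymR ⧸ truncIdeal m

/-- Quotient map `R → Γ^(m)`. -/
def gmk (m : ℕ) : SymR →+* Gamma m := Ideal.Quotient.mk _

/-- `h_α = h_{α_1} ⋯ h_{α_ℓ}` for a finite sequence `α`. -/
def hprod (l : List ℕ) : SymR := (l.map Hh).prod

/-- `e_α = e_{α_1} ⋯ e_{α_ℓ}` for a finite sequence `α`. -/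
def eprod (l : List ℕ) : SymR := (l.map Ee).prod

/-- A partition: a weakly decreasing finite sequence of positive integers. -/
def IsPartitionL (l : List ℕ) : Prop := l.Pairwise (· ≥ ·) ∧ ∀ x ∈ l, 0 < x

/-- `c_λ`: the number of compositions of type `λ` (distinct rearrangements of `λ`). -/
def numComp (l : List ℕ) : ℕ := l.permutations.dedup.length

/-- `c_λ^(m)`: the number of compositions of type `λ` all of whose partial sums are
not divisible by `m`. -/
def numCompM (m : ℕ) (l : List ℕ) : ℕ :=
  (l.permutations.dedup.filter fun δ => decide (∀ j < δ.length, ¬ m ∣ (δ.take (j + 1)).sum)).length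

/-- `ε_λ = (-1)^(|λ|-ℓ(λ))`. -/
def epsL (l : List ℕ) : ℤ := (-1) ^ (l.sum - l.length)

/-- `μ ∈ P(n;m)`: `μ` is a partition with `|μ| ≤ n` and `m ∣ n - |μ|`. -/
def MemPnm (n m : ℕ) (μ : List ℕ) : Prop := IsPartitionL μ ∧ μ.sum ≤ n ∧ m ∣ (n - μ.sum)

/-- Membership of the tuple `L = (ξ^(1), …, ξ^(s))` in `V(β;(ξ,mμ))`. -/
def Vmem (m : ℕ) (β ξ μ : List ℕ) (L : List (List ℕ)) : Prop :=
  L.length = β.length ∧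
  (∀ i < β.length, MemPnm (β.getD i 0) m (L.getD i [])) ∧
  List.Perm L.flatten ξ ∧
  List.Perm (((List.range β.length).map fun i => β.getD i 0 - (L.getD i []).sum).filter
      fun x => decide (x ≠ 0)) (μ.map (m * ·))

/-- `c^(m)_{β;(ξ,mμ)} = ∑_{(ξ^(1),…,ξ^(s)) ∈ V(β;(ξ,mμ))} ∏_i ε_{ξ^(i)} c^(m)_{ξ^(i)}`. -/
def cB (m : ℕ) (β ξ μ : List ℕ) : ℤ :=
  ∑ᶠ L ∈ {L : List (List ℕ) | Vmem m β ξ μ L},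
    ∏ i ∈ Finset.range β.length, epsL (L.getD i []) * (numCompM m (L.getD i []) : ℤ)

/-- The weakly decreasing rearrangement of a finite sequence: `α∪ξ = sortDesc (α ++ ξ)`. -/
def sortDesc (l : List ℕ) : List ℕ := (Multiset.sort (l : Multiset ℕ) (· ≤ ·)).reverse

theorem posfin (n : ℕ) : {l : List ℕ | (∀ x ∈ l, 0 < x) ∧ l.sum ≤ n}.Finite := by
  refine Set.Finite.subset (Set.finite_iUnion (fun k : Fin (n+1) =>
    Set.finite_range (fun c : Composition k => c.blocks))) ?_
  rintro l ⟨h1, h2⟩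
  simp only [Set.mem_iUnion, Set.mem_range]
  exact ⟨⟨l.sum, by omega⟩, ⟨l, fun {i} hi => h1 i hi, rfl⟩, rfl⟩

def PL (n : ℕ) : Finset (List ℕ) := (posfin n).toFinset

theorem mem_PL {n : ℕ} {l : List ℕ} : l ∈ PL n ↔ (∀ x ∈ l, 0 < x) ∧ l.sum ≤ n := by
  simp [PL]

def Good (m : ℕ) (δ : List ℕ) : Prop := ∀ j < δ.length, ¬ m ∣ (δ.take (j + 1)).sum

open Classical in
def CL (m n : ℕ) : Finset (List ℕ) := (PL n).filter fun δ => m ∣ n - δ.sum ∧ Good m δ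

theorem mem_CL {m n : ℕ} {l : List ℕ} : l ∈ CL m n ↔
    ((∀ x ∈ l, 0 < x) ∧ l.sum ≤ n) ∧ m ∣ n - l.sum ∧ Good m l := by
  simp [CL, mem_PL]

theorem good_snoc {m : ℕ} {l : List ℕ} {a : ℕ} :
    Good m (l ++ [a]) ↔ Good m l ∧ ¬ m ∣ l.sum + a := by
  constructor
  · intro h
    constructor
    · intro j hj
      have := h j (by simp; omega)
      rwa [List.take_append_of_le_length (by omega)] at this
    · have := h l.length (by simp)
      rw [List.take_of_length_le (by simp)] at this
      simpa using this
  · rintro ⟨h1, h2⟩ j hj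
    simp at hj
    by_cases hjl : j < l.length
    · rw [List.take_append_of_le_length (by omega)]
      exact h1 j hjl
    · rw [List.take_of_length_le (by simp; omega)]
      simpa using h2

theorem len_le_sum {l : List ℕ} (h : ∀ x ∈ l, 0 < x) : l.length ≤ l.sum := by
  induction l with
  | nil => simp
  | cons a l ih =>
    simp at h ⊢
    have := ih h.2
    omega

theorem eps_snoc {l : List ℕ} (h : ∀ x ∈ l, 0 < x) (i : ℕ) :
    epsL (l ++ [i+1]) = epsL l * (-1) ^ i := by
  have := len_le_sum h
  unfold epsL
  rw [← pow_add]
  congr 1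
  simp
  omega

theorem e_rec {m n : ℕ} (h : ¬ m ∣ n) :
    gmk m (Ee n) = ∑ i ∈ Finset.range n, ((-1 : ℤ) ^ i) • gmk m (Hh (i+1) * Ee (n - (i+1))) := by
  have h0 : gmk m (truncRel n) = 0 := by
    unfold gmk
    rw [Ideal.Quotient.eq_zero_iff_mem]
    apply Ideal.subset_span
    exact ⟨n, Nat.pos_of_ne_zero (by rintro rfl; simp at h), h, rfl⟩
  rw [truncRel, Finset.sum_range_succ', map_add, map_sum] at h0
  have h1 := eq_neg_of_add_eq_zero_right h0
  have e0 : (-1 : SymR) ^ 0 * Hh 0 * Ee (n - 0) = Ee n := by simp [Hh]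
  rw [e0] at h1
  rw [h1, ← Finset.sum_neg_distrib]
  refine Finset.sum_congr rfl fun i _ => ?_
  simp only [map_mul, zsmul_eq_mul, map_pow, map_neg, map_one]
  push_cast
  ring

theorem e_comp (m n : ℕ) :
    gmk m (Ee n) = ∑ δ ∈ CL m n, epsL δ • gmk m (hprod δ * Ee (n - δ.sum)) := by
  induction n using Nat.strong_induction_on with
  | _ n ih =>
  by_cases h : m ∣ n
  · have : CL m n = {[]} := by
      ext l
      simp only [mem_CL, Finset.mem_singleton]
      constructor
      · rintro ⟨⟨h1, h2⟩, h3, h4⟩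
        rcases List.eq_nil_or_concat l with rfl | ⟨l', a, rfl⟩
        · rfl
        · exfalso
          rw [List.concat_eq_append, good_snoc] at h4
          apply h4.2
          have := (Nat.dvd_sub_iff_right h2 h).1 h3
          simpa using this
      · rintro rfl
        simp [h, Good]
    rw [this]
    simp [epsL, hprod]
  · rw [e_rec h]
    have : ∀ i ∈ Finset.range n, ((-1 : ℤ) ^ i) • gmk m (Hh (i+1) * Ee (n - (i+1))) =
        ∑ δ ∈ CL m (n - (i+1)), epsL (δ ++ [i+1]) •
          gmk m (hprod (δ ++ [i+1]) * Ee (n - (δ ++ [i+1]).sum)) := by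
      intro i hi
      simp at hi
      rw [map_mul, ih (n - (i+1)) (by omega), Finset.mul_sum, Finset.smul_sum]
      refine Finset.sum_congr rfl fun δ hδ => ?_
      rw [mem_CL] at hδ
      rw [eps_snoc hδ.1.1]
      have e1 : n - (δ ++ [i+1]).sum = n - (i+1) - δ.sum := by simp; omega
      rw [e1]
      have e2 : hprod (δ ++ [i+1]) = hprod δ * Hh (i+1) := by simp [hprod]
      rw [e2]
      simp only [map_mul, zsmul_eq_mul]
      push_cast
      ring
    rw [Finset.sum_congr rfl this, Finset.sum_sigma']
    refine Finset.sum_bij (fun x _ => x.2 ++ [x.1+1]) ?_ ?_ ?_ ?_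
    · rintro ⟨i, δ⟩ hx
      simp only [Finset.mem_sigma, Finset.mem_range, mem_CL] at hx
      obtain ⟨hi, ⟨h1, h2⟩, h3, h4⟩ := hx
      rw [mem_CL, good_snoc]
      refine ⟨⟨?_, ?_⟩, ?_, h4, ?_⟩
      · intro x hx
        simp at hx
        rcases hx with hx | hx
        · exact h1 x hx
        · omega
      · simp; omega
      · have e1 : n - (δ ++ [i+1]).sum = n - (i+1) - δ.sum := by simp; omega
        rwa [e1]
      · intro hd
        apply h
        have := dvd_add h3 hd
        have e : n - (i+1) - δ.sum + (δ.sum + (i+1)) = n := by omega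
        rwa [e] at this
    · rintro ⟨i, δ⟩ _ ⟨i', δ'⟩ _ he
      have := List.append_inj' he rfl
      simp at this
      obtain ⟨rfl, rfl⟩ := this
      rfl
    · intro l hl
      rcases List.eq_nil_or_concat l with rfl | ⟨l', a, rfl⟩
      · rw [mem_CL] at hl
        simp at hl
        exact absurd hl.1 h
      · rw [List.concat_eq_append, mem_CL, good_snoc] at hl
        obtain ⟨⟨h1, h2⟩, h3, h4, h5⟩ := hl
        have ha := h1 a (by simp)
        simp only [List.sum_append, List.sum_singleton] at h2 h3
        obtain ⟨i, rfl⟩ : ∃ i, a = i + 1 := ⟨a - 1, by omega⟩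
        refine ⟨⟨i, l'⟩, ?_, by simp⟩
        simp only [Finset.mem_sigma, Finset.mem_range, mem_CL]
        refine ⟨by omega, ⟨fun x hx => h1 x (by simp [hx]), by omega⟩, ?_, h4⟩
        have e : n - (i+1) - l'.sum = n - (l'.sum + (i+1)) := by omega
        rwa [e]
    · rintro ⟨i, δ⟩ _
      rfl

theorem sortDesc_perm (l : List ℕ) : (sortDesc l).Perm l := by
  unfold sortDesc
  refine (List.reverse_perm _).trans ?_
  rw [← Multiset.coe_eq_coe, Multiset.sort_eq]

theorem sortDesc_part {l : List ℕ} (h : ∀ x ∈ l, 0 < x) : IsPartitionL (sortDesc l) := by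
  refine ⟨?_, fun x hx => h x ((sortDesc_perm l).mem_iff.1 hx)⟩
  unfold sortDesc
  rw [List.pairwise_reverse]
  exact Multiset.pairwise_sort _ _

theorem part_unique {l l' : List ℕ} (h : IsPartitionL l) (h' : IsPartitionL l')
    (hp : l.Perm l') : l = l' :=
  hp.eq_of_pairwise (fun a b _ _ h1 h2 => le_antisymm h2 h1) h.1 h'.1

theorem hprod_perm {l l' : List ℕ} (h : l.Perm l') : hprod l = hprod l' :=
  (h.map _).prod_eq

theorem eprod_perm {l l' : List ℕ} (h : l.Perm l') : eprod l = eprod l' :=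
  (h.map _).prod_eq

open Classical in
def PP (m n : ℕ) : Finset (List ℕ) := (PL n).filter fun l => MemPnm n m l

theorem mem_PP {m n : ℕ} {l : List ℕ} : l ∈ PP m n ↔ MemPnm n m l := by
  simp only [PP, Finset.mem_filter, mem_PL, and_iff_right_iff_imp]
  exact fun h => ⟨h.1.2, h.2.1⟩

def wt (m : ℕ) (l : List ℕ) : ℤ := epsL l * (numCompM m l : ℤ)

open Classical in
theorem e_part (m n : ℕ) :
    gmk m (Ee n) = ∑ l ∈ PP m n, wt m l • gmk m (hprod l * Ee (n - l.sum)) := by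
  rw [e_comp]
  rw [← Finset.sum_fiberwise_of_maps_to (s := CL m n) (t := PP m n) (g := sortDesc)]
  · refine Finset.sum_congr rfl fun l hl => ?_
    rw [mem_PP] at hl
    have hc : ({δ ∈ CL m n | sortDesc δ = l} : Finset _).card = numCompM m l := by
      unfold numCompM
      rw [← List.toFinset_card_of_nodup ((List.nodup_dedup _).filter _)]
      congr 1
      ext δ
      simp only [Finset.mem_filter, mem_CL, List.mem_toFinset, List.mem_filter, List.mem_dedup,
        List.mem_permutations, decide_eq_true_eq]
      constructor
      · rintro ⟨⟨_, _, h⟩, rfl⟩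
        exact ⟨(sortDesc_perm δ).symm, h⟩
      · rintro ⟨hp, h⟩
        refine ⟨⟨⟨fun x hx => hl.1.2 x (hp.mem_iff.1 hx), ?_⟩, ?_, h⟩, ?_⟩
        · rw [hp.sum_eq]; exact hl.2.1
        · rw [hp.sum_eq]; exact hl.2.2
        · exact part_unique (sortDesc_part fun x hx => hl.1.2 x (hp.mem_iff.1 hx)) hl.1
            ((sortDesc_perm δ).trans hp)
    rw [Finset.sum_congr rfl (g := fun _ => epsL l • gmk m (hprod l * Ee (n - l.sum))),
      Finset.sum_const, hc, wt]
    · rw [mul_comm (epsL l), mul_smul, natCast_zsmul]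
    · intro δ hδ
      have hp : δ.Perm l := (Finset.mem_filter.1 hδ).2 ▸ (sortDesc_perm δ).symm
      rw [hprod_perm hp, epsL, epsL, hp.sum_eq, hp.length_eq]
  · intro δ hδ
    rw [mem_CL] at hδ
    rw [mem_PP]
    refine ⟨sortDesc_part hδ.1.1, ?_, ?_⟩
    · rw [(sortDesc_perm δ).sum_eq]; exact hδ.1.2
    · rw [(sortDesc_perm δ).sum_eq]; exact hδ.2.1

open Classical in
def TL (m : ℕ) : List ℕ → Finset (List (List ℕ))
  | [] => {[]}
  | b :: β => (PP m b ×ˢ TL m β).image fun p => p.1 :: p.2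

def res (β : List ℕ) (L : List (List ℕ)) : List ℕ := List.zipWith (fun b l => b - l.sum) β L

theorem e_prod (m : ℕ) (β : List ℕ) :
    gmk m (eprod β) = ∑ L ∈ TL m β, (L.map (wt m)).prod •
      gmk m (hprod L.flatten * eprod (res β L)) := by
  induction β with
  | nil => simp [TL, eprod, hprod, res]
  | cons b β ih =>
    have : eprod (b :: β) = Ee b * eprod β := by simp [eprod]
    rw [this, map_mul, e_part, ih, Finset.sum_mul_sum, TL, Finset.sum_image, Finset.sum_product]
    · refine Finset.sum_congr rfl fun l _ => Finset.sum_congr rfl fun L _ => ?_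
      simp only [res, List.map_cons, List.prod_cons, List.flatten_cons, List.zipWith_cons_cons,
        hprod, eprod, List.map_append, List.prod_append, map_mul, zsmul_eq_mul]
      push_cast
      ring
    · rintro ⟨a, b⟩ _ ⟨c, d⟩ _ h
      simpa using h

theorem mem_TL {m : ℕ} {β : List ℕ} {L : List (List ℕ)} : L ∈ TL m β ↔
    L.length = β.length ∧ ∀ i < β.length, MemPnm (β.getD i 0) m (L.getD i []) := by
  induction β generalizing L with
  | nil => simp [TL]
  | cons b β ih =>
    simp only [TL, Finset.mem_image, Finset.mem_product, Prod.exists, mem_PP]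
    constructor
    · rintro ⟨l, L', ⟨h1, h2⟩, rfl⟩
      rw [ih] at h2
      refine ⟨by simp [h2.1], fun i hi => ?_⟩
      cases i with
      | zero => simpa using h1
      | succ i => simpa using h2.2 i (by simpa using hi)
    · rintro ⟨h1, h2⟩
      cases L with
      | nil => simp at h1
      | cons l L =>
        refine ⟨l, L, ⟨by simpa using h2 0 (by simp), ih.2 ⟨by simpa using h1, fun i hi => ?_⟩⟩, rfl⟩
        simpa using h2 (i+1) (by simpa using hi)

theorem res_eq {β : List ℕ} {L : List (List ℕ)} (h : L.length = β.length) :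
    ((List.range β.length).map fun i => β.getD i 0 - (L.getD i []).sum) = res β L := by
  apply List.ext_getElem
  · simp [res, h]
  · intro i h1 h2
    simp at h1
    have : i < L.length := by omega
    simp [res, h1, this]

theorem wt_eq {m : ℕ} (L : List (List ℕ)) :
    ∏ i ∈ Finset.range L.length, epsL (L.getD i []) * (numCompM m (L.getD i []) : ℤ) =
      (L.map (wt m)).prod := by
  induction L with
  | nil => simp
  | cons l L ih =>
    rw [List.length_cons, Finset.prod_range_succ']
    simp only [List.getD_cons_succ, List.getD_cons_zero]
    rw [ih, List.map_cons, List.prod_cons, mul_comm]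
    rfl

theorem Vmem_iff {m : ℕ} {β ξ μ : List ℕ} {L : List (List ℕ)} : Vmem m β ξ μ L ↔
    L ∈ TL m β ∧ L.flatten.Perm ξ ∧
      ((res β L).filter fun x => decide (x ≠ 0)).Perm (μ.map (m * ·)) := by
  rw [mem_TL, Vmem]
  constructor
  · rintro ⟨h1, h2, h3, h4⟩
    rw [res_eq h1] at h4
    exact ⟨⟨h1, h2⟩, h3, h4⟩
  · rintro ⟨⟨h1, h2⟩, h3, h4⟩
    rw [← res_eq h1] at h4
    exact ⟨h1, h2, h3, h4⟩

open Classical in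
theorem cB_eq (m : ℕ) (β ξ μ : List ℕ) :
    cB m β ξ μ = ∑ L ∈ (TL m β).filter (fun L => Vmem m β ξ μ L), (L.map (wt m)).prod := by
  unfold cB
  have : {L : List (List ℕ) | Vmem m β ξ μ L} =
      (((TL m β).filter (fun L => Vmem m β ξ μ L) : Finset _) : Set (List (List ℕ))) := by
    ext L
    simp only [Set.mem_setOf_eq, Finset.coe_filter]
    exact ⟨fun h => ⟨(Vmem_iff.1 h).1, h⟩, fun h => h.2⟩
  rw [this, finsum_mem_coe_finset]
  refine Finset.sum_congr rfl fun L hL => ?_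
  have := (mem_TL.1 (Finset.mem_filter.1 hL).1).1
  rw [← this, wt_eq]

theorem eprod_filter (l : List ℕ) : eprod (l.filter fun x => decide (x ≠ 0)) = eprod l := by
  induction l with
  | nil => rfl
  | cons a l ih =>
    unfold eprod at ih ⊢
    by_cases h : a = 0
    · subst h
      simpa [Ee] using ih
    · simp only [ne_eq, h, not_false_eq_true, decide_true, List.filter_cons_of_pos, List.map_cons, List.prod_cons]
      rw [← ih]

theorem sum_filter_ne (l : List ℕ) : (l.filter fun x => decide (x ≠ 0)).sum = l.sum := by
  induction l with
  | nil => rfl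
  | cons a l ih =>
    by_cases h : a = 0
    · subst h
      simpa using ih
    · simp only [ne_eq, h, not_false_eq_true, decide_true, List.filter_cons_of_pos, List.sum_cons]
      rw [← ih]

theorem TL_facts {m : ℕ} {β : List ℕ} {L : List (List ℕ)} (h : L ∈ TL m β) :
    L.flatten.sum + (res β L).sum = β.sum ∧ (∀ x ∈ L.flatten, 0 < x) ∧ ∀ x ∈ res β L, m ∣ x := by
  induction β generalizing L with
  | nil => 
    simp [TL] at h
    subst h
    simp [res]
  | cons b β ih =>
    simp only [TL, Finset.mem_image, Finset.mem_product, Prod.exists, mem_PP] at h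
    obtain ⟨l, L', ⟨h1, h2⟩, rfl⟩ := h
    obtain ⟨i1, i2, i3⟩ := ih h2
    unfold res at *
    refine ⟨?_, ?_, ?_⟩
    · have := h1.2.1
      simp only [List.flatten_cons, List.sum_append, List.zipWith_cons_cons, List.sum_cons]
      omega
    · intro x hx
      rw [List.flatten_cons, List.mem_append] at hx
      exact hx.elim (h1.1.2 x) (i2 x)
    · intro x hx
      rw [List.zipWith_cons_cons, List.mem_cons] at hx
      rcases hx with rfl | hx
      · exact h1.2.2
      · exact i3 x hx

theorem sum_map_mul' (m : ℕ) (l : List ℕ) : (l.map (m * ·)).sum = m * l.sum := by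
  induction l with
  | nil => simp
  | cons a l ih => simp [ih, mul_add]

/-- the key of L -/
def keyMu (m : ℕ) (β : List ℕ) (L : List (List ℕ)) : List ℕ :=
  sortDesc (((res β L).filter fun x => decide (x ≠ 0)).map (· / m))

theorem keyMu_perm {m : ℕ} {β : List ℕ} {L : List (List ℕ)} (h : L ∈ TL m β) :
    ((res β L).filter fun x => decide (x ≠ 0)).Perm ((keyMu m β L).map (m * ·)) := by
  refine List.Perm.trans ?_ ((sortDesc_perm _).symm.map _)
  rw [List.map_map]
  have : (List.map ((fun x => m * x) ∘ fun x => x / m) ((res β L).filter fun x => decide (x ≠ 0)))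
      = ((res β L).filter fun x => decide (x ≠ 0)) := by
    conv_rhs => rw [← List.map_id ((res β L).filter fun x => decide (x ≠ 0))]
    refine List.map_congr_left fun x hx => ?_
    exact Nat.mul_div_cancel' ((TL_facts h).2.2 x (List.mem_filter.1 hx).1)
  rw [this]

theorem keyMu_part {m : ℕ} {β : List ℕ} {L : List (List ℕ)} (h : L ∈ TL m β) :
    IsPartitionL (keyMu m β L) := by
  apply sortDesc_part
  intro x hx
  rw [List.mem_map] at hx
  obtain ⟨y, hy, rfl⟩ := hx
  rw [List.mem_filter] at hy
  obtain ⟨k, rfl⟩ := (TL_facts h).2.2 y hy.1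
  have h0 : m * k ≠ 0 := by simpa using hy.2
  have hm : 0 < m := Nat.pos_of_ne_zero (by rintro rfl; simp at h0)
  rw [Nat.mul_div_cancel_left _ hm]
  exact Nat.pos_of_ne_zero (by rintro rfl; simp at h0)

theorem qfin {m n a : ℕ} (hm : 0 < m) : {q : List ℕ × List ℕ |
          IsPartitionL q.1 ∧ IsPartitionL q.2 ∧ a + q.1.sum + m * q.2.sum = n}.Finite := by
  refine Set.Finite.subset ((posfin n).prod (posfin n)) ?_
  rintro ⟨x, y⟩ ⟨h1, h2, h3⟩
  simp only at h3
  have : y.sum ≤ m * y.sum := Nat.le_mul_of_pos_left _ hm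
  exact ⟨⟨h1.2, by simp only; omega⟩, ⟨h2.2, by simp only; omega⟩⟩

theorem stmt0 {m n : ℕ} (hm : 0 < m) (α β : List ℕ)
    (hα : ∀ x ∈ α, 0 < x) (hβ : ∀ x ∈ β, 0 < x) (hn : α.sum + β.sum = n) :
    gmk m (hprod α * eprod β) =
      ∑ᶠ q ∈ {q : List ℕ × List ℕ |
          IsPartitionL q.1 ∧ IsPartitionL q.2 ∧ α.sum + q.1.sum + m * q.2.sum = n},
        cB m β q.1 q.2 • gmk m (hprod (sortDesc (α ++ q.1)) * eprod (q.2.map (m * ·))) := by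
  classical
  rw [finsum_mem_eq_finite_toFinset_sum _ (qfin hm)]
  simp only [cB_eq, Finset.sum_smul, Finset.sum_filter]
  rw [Finset.sum_comm, map_mul, e_prod, Finset.mul_sum]
  refine Finset.sum_congr rfl fun L hL => ?_
  obtain ⟨f1, f2, f3⟩ := TL_facts hL
  have hk := keyMu_perm hL
  rw [Finset.sum_eq_single (sortDesc L.flatten, keyMu m β L)]
  · rw [if_pos (Vmem_iff.2 ⟨hL, (sortDesc_perm _).symm, hk⟩)]
    simp only
    rw [hprod_perm (sortDesc_perm _), ← eprod_perm hk, eprod_filter]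
    have e : hprod (α ++ sortDesc L.flatten) = hprod α * hprod L.flatten := by
      rw [hprod_perm ((sortDesc_perm L.flatten).append_left α)]
      simp [hprod]
    rw [e]
    simp only [map_mul, zsmul_eq_mul]
    ring
  · rintro ⟨ξ, μ⟩ hq hne
    rw [if_neg, zero_smul]
    intro hV
    apply hne
    rw [Set.Finite.mem_toFinset] at hq
    obtain ⟨q1, q2, _⟩ := hq
    obtain ⟨_, v1, v2⟩ := Vmem_iff.1 hV
    simp only at v1 v2 q1 q2
    have a1 : ξ = sortDesc L.flatten :=
      part_unique q1 (sortDesc_part f2) (v1.symm.trans (sortDesc_perm _).symm)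
    have a2 : μ = keyMu m β L := by
      refine part_unique q2 (keyMu_part hL) ?_
      exact (List.map_perm_map_iff (fun x y h => Nat.eq_of_mul_eq_mul_left hm h)).1 (v2.symm.trans hk)
    rw [a1, a2]
  · intro hnot
    exfalso
    apply hnot
    rw [Set.Finite.mem_toFinset]
    refine ⟨sortDesc_part f2, keyMu_part hL, ?_⟩
    simp only
    rw [(sortDesc_perm _).sum_eq, ← sum_map_mul', ← hk.sum_eq, sum_filter_ne]
    omega
end
end

section
/- Let m be a positive integer. For every n ≥ 0, in the ring Γ^(m) we have e_n = ∑_{μ ∈ P(n;m)} ε_μ c_μ^(m) h_μ e_{n−|μ|}, where for μ with |μ| = n the factor e_0 is interpreted as 1. -/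
noncomputable section

open MvPolynomial

/-- suffix condition -/
def SufGood (m : ℕ) : List ℕ → Prop
  | [] => True
  | a :: l => ¬ m ∣ (a + l.sum) ∧ SufGood m l

def comps (m : ℕ) (n : ℕ) : Finset (List ℕ) :=
  if m ∣ n then {[]} else
    (Finset.range n).attach.biUnion fun i => (comps m (n - 1 - i.1)).image (List.cons (i.1 + 1))
termination_by n
decreasing_by
  have := Finset.mem_range.1 i.2
  omega

theorem comps_of_dvd {m n : ℕ} (h : m ∣ n) : comps m n = {[]} := by
  rw [comps, if_pos h]

theorem comps_of_not_dvd {m n : ℕ} (h : ¬ m ∣ n) : comps m n =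
    (Finset.range n).biUnion fun i => (comps m (n - 1 - i)).image (List.cons (i + 1)) := by
  rw [comps, if_neg h]
  ext l
  simp

theorem mem_comps (m n : ℕ) (l : List ℕ) : l ∈ comps m n ↔
    (∀ x ∈ l, 0 < x) ∧ l.sum ≤ n ∧ m ∣ (n - l.sum) ∧ SufGood m l := by
  induction l generalizing n with
  | nil =>
    by_cases h : m ∣ n
    · simp [comps_of_dvd h, SufGood, h]
    · simp [comps_of_not_dvd h, h]
  | cons a l ih =>
    by_cases h : m ∣ n
    · simp only [comps_of_dvd h, Finset.mem_singleton, SufGood, List.sum_cons]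
      constructor
      · simp
      · rintro ⟨-, h1, h2, h3, -⟩
        exact absurd ((Nat.dvd_sub_iff_right h1 h).1 h2) h3
    · simp only [comps_of_not_dvd h, Finset.mem_biUnion, Finset.mem_image, Finset.mem_range,
        List.cons.injEq, SufGood, List.sum_cons, List.mem_cons, forall_eq_or_imp]
      constructor
      · rintro ⟨i, hi, l', hl', rfl, rfl⟩
        obtain ⟨h1, h2, h3, h4⟩ := (ih _).1 hl'
        have e : n - 1 - i - l'.sum = n - (i + 1 + l'.sum) := by omega
        rw [e] at h3
        have hle : i + 1 + l'.sum ≤ n := by omega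
        refine ⟨⟨by omega, h1⟩, hle, h3, fun hd => h ?_, h4⟩
        have := dvd_add h3 hd
        rwa [Nat.sub_add_cancel hle] at this
      · rintro ⟨⟨h0, h1⟩, h2, h3, h4, h5⟩
        refine ⟨a - 1, by omega, l, (ih _).2 ⟨h1, by omega, ?_, h5⟩, by omega, rfl⟩
        have e : n - 1 - (a - 1) - l.sum = n - (a + l.sum) := by omega
        rwa [e]

theorem prefGood_reverse (m : ℕ) (l : List ℕ) :
    (∀ j < l.reverse.length, ¬ m ∣ (l.reverse.take (j + 1)).sum) ↔ SufGood m l := by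
  induction l with
  | nil => simp [SufGood]
  | cons a l ih =>
    rw [SufGood, ← ih]
    simp only [List.reverse_cons, List.length_append, List.length_reverse, List.length_singleton]
    constructor
    · intro H
      constructor
      · have := H l.length (by omega)
        rw [List.take_of_length_le (by simp)] at this
        simpa [add_comm] using this
      · intro j hj
        have := H j (by omega)
        rwa [List.take_append_of_le_length (by simp; omega)] at this
    · rintro ⟨h1, h2⟩ j hj
      rcases Nat.lt_succ_iff_lt_or_eq.1 hj with hj | rfl
      · rw [List.take_append_of_le_length (by simp; omega)]
        exact h2 j hj
      · rw [List.take_of_length_le (by simp)]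
        simpa [add_comm] using h1

theorem length_le_sum_pos (l : List ℕ) (h : ∀ x ∈ l, 0 < x) : l.length ≤ l.sum := by
  induction l with
  | nil => simp
  | cons a l ih =>
    simp only [List.mem_cons, forall_eq_or_imp] at h
    have := ih h.2
    simp only [List.length_cons, List.sum_cons]
    omega

theorem rel_zero {m n : ℕ} (h : ¬ m ∣ n) :
    gmk m (Ee n) = ∑ i ∈ Finset.range n,
      ((-1 : ℤ) ^ i) • (gmk m (Hh (i + 1)) * gmk m (Ee (n - 1 - i))) := by
  have hn : 0 < n := Nat.pos_of_ne_zero (by rintro rfl; simp at h)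
  have h0 : gmk m (truncRel n) = 0 :=
    Ideal.Quotient.eq_zero_iff_mem.2 (Ideal.subset_span ⟨n, hn, h, rfl⟩)
  rw [truncRel, Finset.sum_range_succ', map_add, map_sum] at h0
  have h1 : gmk m ((-1) ^ 0 * Hh 0 * Ee (n - 0)) = gmk m (Ee n) := by simp [Hh]
  rw [h1] at h0
  rw [eq_neg_of_add_eq_zero_right h0, ← Finset.sum_neg_distrib]
  refine Finset.sum_congr rfl fun i _ => ?_
  have e : n - (i + 1) = n - 1 - i := by omega
  rw [e, zsmul_eq_mul]
  simp only [map_mul, map_pow, map_neg, map_one]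
  push_cast
  ring

theorem comps_sum (m n : ℕ) : gmk m (Ee n) =
    ∑ l ∈ comps m n, epsL l • gmk m (hprod l * Ee (n - l.sum)) := by
  induction n using Nat.strong_induction_on with
  | _ n ih =>
  by_cases h : m ∣ n
  · simp [comps_of_dvd h, epsL, hprod]
  · rw [comps_of_not_dvd h, Finset.sum_biUnion, rel_zero h]
    · refine Finset.sum_congr rfl fun i hi => ?_
      have hi := Finset.mem_range.1 hi
      rw [Finset.sum_image (by intro a _ b _ hab; simpa using hab), ih (n - 1 - i) (by omega),
        Finset.mul_sum, Finset.smul_sum]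
      refine Finset.sum_congr rfl fun l hl => ?_
      obtain ⟨h1, h2, -, -⟩ := (mem_comps _ _ _).1 hl
      have h3 := length_le_sum_pos l h1
      have e : epsL ((i + 1) :: l) = (-1) ^ i * epsL l := by
        rw [epsL, epsL, ← pow_add, List.sum_cons, List.length_cons]
        congr 1
        omega
      have e2 : n - ((i + 1) :: l).sum = n - 1 - i - l.sum := by
        rw [List.sum_cons]; omega
      have e3 : hprod ((i + 1) :: l) = Hh (i + 1) * hprod l := by simp [hprod]
      rw [e, e2, e3]
      simp only [map_mul, zsmul_eq_mul]
      push_cast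
      ring
    · intro i _ j _ hij
      rw [Function.onFun, Finset.disjoint_left]
      intro l h1 h2
      simp only [Finset.mem_image] at h1 h2
      obtain ⟨a, -, rfl⟩ := h1
      obtain ⟨b, -, hb⟩ := h2
      simp at hb
      omega

def srt (l : List ℕ) : List ℕ := l.insertionSort (· ≥ ·)

theorem srt_perm (l : List ℕ) : (srt l).Perm l := List.perm_insertionSort _ _

theorem srt_eq_iff {l μ : List ℕ} (h : IsPartitionL μ) : srt l = μ ↔ l.Perm μ := by
  constructor
  · rintro rfl
    exact (srt_perm l).symm
  · intro hp
    exact List.Perm.eq_of_pairwise' (List.pairwise_insertionSort _ _) h.1 ((srt_perm l).trans hp)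

theorem numCompM_eq {n m : ℕ} {μ : List ℕ} (h : MemPnm n m μ) :
    numCompM m μ = ((comps m n).filter fun l => srt l = μ).card := by
  rw [numCompM, ← List.toFinset_card_of_nodup ((List.nodup_dedup _).filter _)]
  refine Finset.card_bij' (fun l _ => l.reverse) (fun l _ => l.reverse) ?_ ?_ ?_ ?_
  · intro l hl
    simp only [List.mem_toFinset, List.mem_filter, List.mem_dedup, List.mem_permutations,
      decide_eq_true_eq] at hl
    obtain ⟨hp, hg⟩ := hl
    have hp' : l.reverse.Perm μ := l.reverse_perm.trans hp
    rw [Finset.mem_filter, srt_eq_iff h.1, mem_comps, ← prefGood_reverse, List.reverse_reverse,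
      hp'.sum_eq]
    exact ⟨⟨fun x hx => h.1.2 x (hp'.mem_iff.1 hx), h.2.1, h.2.2, hg⟩, hp'⟩
  · intro l hl
    rw [Finset.mem_filter, srt_eq_iff h.1, mem_comps, ← prefGood_reverse] at hl
    simp only [List.mem_toFinset, List.mem_filter, List.mem_dedup, List.mem_permutations,
      decide_eq_true_eq]
    exact ⟨l.reverse_perm.trans hl.2, hl.1.2.2.2⟩
  · simp
  · simp

theorem srt_mem {n m : ℕ} {l : List ℕ} (h : l ∈ comps m n) : MemPnm n m (srt l) := by
  obtain ⟨h1, h2, h3, -⟩ := (mem_comps _ _ _).1 h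
  refine ⟨⟨List.pairwise_insertionSort _ _, fun x hx => h1 x ((srt_perm l).mem_iff.1 hx)⟩, ?_, ?_⟩
  · rwa [(srt_perm l).sum_eq]
  · rwa [(srt_perm l).sum_eq]

theorem stmt1 {m : ℕ} (hm : 0 < m) (n : ℕ) :
    gmk m (Ee n) =
      ∑ᶠ μ ∈ {μ : List ℕ | MemPnm n m μ},
        (epsL μ * (numCompM m μ : ℤ)) • gmk m (hprod μ * Ee (n - μ.sum)) := by
  rw [finsum_mem_eq_sum_of_inter_support_eq (t := (comps m n).image srt), comps_sum,
    ← Finset.sum_fiberwise_of_maps_to (g := srt) (t := (comps m n).image srt)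
      (fun l hl => Finset.mem_image_of_mem _ hl)]
  · refine Finset.sum_congr rfl fun μ hμ => ?_
    obtain ⟨l, hl, rfl⟩ := Finset.mem_image.1 hμ
    have hM := srt_mem hl
    rw [numCompM_eq hM, mul_comm, mul_smul, natCast_zsmul]
    refine Finset.sum_eq_card_nsmul fun l' hl' => ?_
    have hp : l'.Perm (srt l) := (srt_eq_iff hM.1).1 (Finset.mem_filter.1 hl').2
    have e : hprod l' = hprod (srt l) := (hp.map Hh).prod_eq
    rw [epsL, epsL, e, hp.sum_eq, hp.length_eq]
  · ext μ
    simp only [Set.mem_inter_iff, Set.mem_setOf_eq, Finset.mem_coe, Function.mem_support]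
    refine and_congr_left fun hs => ⟨fun h => ?_, fun h => ?_⟩
    · have hc : ((comps m n).filter fun l => srt l = μ).card ≠ 0 := by
        intro h0
        apply hs
        rw [numCompM_eq h, h0]
        simp
      obtain ⟨l, hl⟩ := Finset.card_ne_zero.1 hc
      obtain ⟨h1, h2⟩ := Finset.mem_filter.1 hl
      exact Finset.mem_image.2 ⟨l, h1, h2⟩
    · obtain ⟨l, hl, rfl⟩ := Finset.mem_image.1 h
      exact srt_mem hl
end
end

section
/- Let m be a positive integer. For every d ≥ 1, in the ring Γ^(m) the element e_d is a ℤ-linear combination of elements of the form h_λ e_{sm}, where λ ranges over partitions and s over nonnegative integers with |λ| + sm = d (with e_0 = 1). -/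
noncomputable section

open MvPolynomial

def TT (m d : ℕ) : Submodule ℤ (Gamma m) :=
  Submodule.span ℤ ((fun q : List ℕ × ℕ => gmk m (hprod q.1 * Ee (q.2 * m))) ''
    {q | IsPartitionL q.1 ∧ q.1.sum + q.2 * m = d})

theorem TT_mul (m d i : ℕ) (hi : 0 < i) (x : Gamma m) (hx : x ∈ TT m d) :
    gmk m (Hh i) * x ∈ TT m (d + i) := by
  unfold TT at hx
  induction hx using Submodule.span_induction with
  | mem x hx =>
    obtain ⟨q, ⟨⟨hq1, hq2⟩, hq3⟩, rfl⟩ := hx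
    have hp : (q.1.insertionSort (· ≥ ·)).Perm q.1 := List.perm_insertionSort _ _
    have hp' : ((i :: q.1).insertionSort (· ≥ ·)).Perm (i :: q.1) := List.perm_insertionSort _ _
    apply Submodule.subset_span
    refine ⟨((i :: q.1).insertionSort (· ≥ ·), q.2), ⟨⟨List.pairwise_insertionSort _ _, ?_⟩, ?_⟩, ?_⟩
    · intro x hx
      rcases List.mem_cons.1 (hp'.mem_iff.1 hx) with h | h
      · omega
      · exact hq2 x h
    · have := hp'.sum_eq
      simp only [List.sum_cons] at this
      simp only [this]
      omega
    · have : hprod ((i :: q.1).insertionSort (· ≥ ·)) = Hh i * hprod q.1 := by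
        unfold hprod
        rw [(hp'.map Hh).prod_eq, List.map_cons, List.prod_cons]
      simp only [this, map_mul, mul_assoc]
  | zero => simp
  | add x y _ _ hx hy => rw [mul_add]; exact add_mem hx hy
  | smul a x _ hx => rw [mul_smul_comm]; exact Submodule.smul_mem _ _ hx

theorem Ee_mem (m d : ℕ) : gmk m (Ee d) ∈ TT m d := by
  induction d using Nat.strong_induction_on with
  | _ d ih =>
  by_cases h : m ∣ d
  · obtain ⟨s, rfl⟩ := h
    apply Submodule.subset_span
    refine ⟨([], s), ⟨⟨by simp, by simp⟩, by simp [mul_comm]⟩, ?_⟩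
    simp [hprod, mul_comm]
  · have hd : 0 < d := by
      rcases Nat.eq_zero_or_pos d with h0 | h0
      · subst h0; simp at h
      · exact h0
    have h0 : gmk m (truncRel d) = 0 :=
      Ideal.Quotient.eq_zero_iff_mem.2 (Ideal.subset_span ⟨d, hd, h, rfl⟩)
    unfold truncRel at h0
    rw [Finset.sum_range_succ', map_add, map_sum] at h0
    simp only [pow_zero, one_mul, Nat.sub_zero, Hh, if_true] at h0
    rw [eq_neg_of_add_eq_zero_right h0]
    apply neg_mem
    apply sum_mem
    intro i hi
    have hi' := Finset.mem_range.1 hi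
    have key := TT_mul m (d - (i+1)) (i+1) (by omega) _ (ih (d - (i+1)) (by omega))
    rw [Nat.sub_add_cancel (by omega)] at key
    have e : (-1 : SymR) ^ (i+1) = (((-1 : ℤ) ^ (i+1) : ℤ) : SymR) := by simp
    have := Submodule.smul_mem _ ((-1 : ℤ) ^ (i+1)) key
    rw [zsmul_eq_mul] at this
    rw [e, map_mul, map_mul, map_intCast, mul_assoc]
    exact this

theorem stmt2 {m : ℕ} (hm : 0 < m) (d : ℕ) (hd : 1 ≤ d) :
    ∃ (S : Finset (List ℕ × ℕ)) (c : List ℕ × ℕ → ℤ),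
      (∀ q ∈ S, IsPartitionL q.1 ∧ q.1.sum + q.2 * m = d) ∧
      gmk m (Ee d) = ∑ q ∈ S, c q • gmk m (hprod q.1 * Ee (q.2 * m)) := by
  have h := Ee_mem m d
  unfold TT at h
  rw [Finsupp.mem_span_image_iff_linearCombination] at h
  obtain ⟨l, hl, hl2⟩ := h
  refine ⟨l.support, l, fun q hq => (Finsupp.mem_supported _ _).1 hl hq, ?_⟩
  rw [← hl2, Finsupp.linearCombination_apply, Finsupp.sum]
end
end

section
/- Let m be a positive integer. For every d ≥ 1, in the ring Γ^(m) we have e_d = det(A_d), where A_d is the d×d matrix with entries a_{ij} given by: a_{ij} = h_{1−i+j} if m does not divide j; a_{ij} = (−1)^{j+1} e_j if m divides j and i = 1; a_{ij} = 1 if m divides j and i = j+1; and a_{ij} = 0 otherwise. -/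
noncomputable section

open MvPolynomial

/-- `h_i` for an integer index, with `h_i = 0` for `i < 0` and `h_0 = 1`. -/
def HhZ (i : ℤ) : SymR := if i < 0 then 0 else Hh i.toNat

/-- The `d × d` matrix `A_d = (a_{ij})_{1 ≤ i,j ≤ d}` with `a_{ij} = h_{1-i+j}` if `m ∤ j`,
`a_{ij} = (-1)^{j+1} e_j` if `m ∣ j` and `i = 1`, `a_{ij} = 1` if `m ∣ j` and `i = j+1`,
and `a_{ij} = 0` otherwise.  (Indices are 1-based: `i = i₀ + 1`, `j = j₀ + 1`.) -/
def Amat (m d : ℕ) : Matrix (Fin d) (Fin d) SymR := fun i j =>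
  if ¬ m ∣ ((j : ℕ) + 1) then HhZ (1 - ((i : ℕ) + 1 : ℤ) + ((j : ℕ) + 1 : ℤ))
  else if (i : ℕ) + 1 = 1 then (-1 : SymR) ^ (((j : ℕ) + 1) + 1) * Ee ((j : ℕ) + 1)
  else if (i : ℕ) + 1 = ((j : ℕ) + 1) + 1 then 1
  else 0

lemma HhZ_nat_sub (J i : ℕ) (h : i ≤ J) : HhZ (1 - ((i : ℤ) + 1) + (J : ℤ)) = Hh (J - i) := by
  unfold HhZ
  rw [if_neg (by omega)]
  congr 1
  omega

lemma HhZ_neg (J i : ℕ) (h : J < i) : HhZ (1 - ((i : ℤ) + 1) + (J : ℤ)) = 0 := by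
  unfold HhZ
  rw [if_pos (by omega)]

lemma gmk_truncRel (m J : ℕ) (hJ : 0 < J) (hm : ¬ m ∣ J) : gmk m (truncRel J) = 0 :=
  Ideal.Quotient.eq_zero_iff_mem.2 (Ideal.subset_span ⟨J, hJ, hm, rfl⟩)

lemma full_sum (m J : ℕ) (hJ : 0 < J) (hm : ¬ m ∣ J) :
    gmk m (∑ i ∈ Finset.range (J + 1),
      (-1 : SymR) ^ i * Ee i * HhZ (1 - ((i : ℤ) + 1) + (J : ℤ))) = 0 := by
  have : ∑ i ∈ Finset.range (J + 1),
      (-1 : SymR) ^ i * Ee i * HhZ (1 - ((i : ℤ) + 1) + (J : ℤ)) = (-1) ^ J * truncRel J := by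
    unfold truncRel
    rw [← Finset.sum_range_reflect, Finset.mul_sum]
    refine Finset.sum_congr rfl fun k hk => ?_
    have hk : k ≤ J := by simpa [Nat.lt_succ_iff] using hk
    have e : J + 1 - 1 - k = J - k := by omega
    rw [e, HhZ_nat_sub _ _ (by omega), Nat.sub_sub_self hk]
    obtain ⟨l, rfl⟩ := Nat.exists_eq_add_of_le hk
    have h2 : ((-1 : SymR) ^ k) * (-1) ^ k = 1 := by
      rw [← mul_pow]; simp
    rw [Nat.add_sub_cancel_left, pow_add]
    linear_combination (-((-1 : SymR) ^ l * Ee l * Hh k)) * h2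
  rw [this, map_mul, gmk_truncRel m J hJ hm, mul_zero]

lemma col_sum (m n : ℕ) (j : Fin (n + 1)) :
    gmk m (∑ i : Fin (n + 1), (-1 : SymR) ^ (i : ℕ) * Ee i * Amat m (n + 1) i j)
      = if j = Fin.last n then gmk m ((-1) ^ n * Ee (n + 1)) else 0 := by
  obtain ⟨j, hj⟩ := j
  by_cases hm : m ∣ j + 1
  · simp only [Amat, hm, not_true_eq_false, if_false]
    rw [Fin.sum_univ_succ]
    simp only [Fin.val_zero, Fin.val_succ, Fin.ext_iff, Fin.val_last]
    have hz : ∀ i : Fin n, ((i : ℕ) + 1 + 1 = 1) = False := fun i => by simp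
    have hz0 : ((((0 : Fin (n + 1)) : ℕ) + 1 = 1)) = True := by simp
    simp only [Fin.val_zero] at hz0
    simp only [hz, hz0, if_true, if_false, mul_ite, mul_one, mul_zero]
    have hE : Ee 0 = 1 := by simp [Ee]
    split_ifs with h2
    · subst h2
      rw [Finset.sum_eq_zero]
      · simp only [hE]; congr 1; ring
      · intro i _
        rw [if_neg]; have := i.2; omega
    · rw [Finset.sum_eq_single ⟨j, by omega⟩]
      · simp only [hE, if_true]
        rw [← map_zero (gmk m)]; congr 1; ring
      · intro i _ hi
        rw [if_neg]; intro h; apply hi; ext; simp; omega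
      · simp
  · simp only [Amat, hm, not_false_eq_true, if_true]
    have hs := full_sum m (j + 1) (by omega) hm
    push_cast at hs
    rw [Fin.sum_univ_eq_sum_range (fun i => (-1 : SymR) ^ i * Ee i *
      HhZ (1 - ((i : ℤ) + 1) + ((j : ℤ) + 1))) (n + 1)]
    split_ifs with h
    · have h : j = n := by simpa [Fin.ext_iff] using h
      subst h
      rw [Finset.sum_range_succ, map_add] at hs
      rw [eq_neg_of_add_eq_zero_left hs]
      have := HhZ_nat_sub (j + 1) (j + 1) le_rfl
      push_cast at this ⊢
      rw [this, ← map_neg]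
      congr 1
      simp [Hh, pow_succ]
    · have h : j ≠ n := by simpa [Fin.ext_iff] using h
      rw [← hs]
      congr 1
      symm
      apply Finset.sum_subset
      · intro x; simp only [Finset.mem_range]; omega
      · intro x _ hx
        simp only [Finset.mem_range] at hx
        have := HhZ_neg (j + 1) x (by omega)
        push_cast at this
        rw [this, mul_zero]

lemma minor_det (m n : ℕ) :
    ((Amat m (n + 1)).submatrix Fin.succ Fin.castSucc).det = 1 := by
  rw [Matrix.det_of_isUpperTriangular]
  · apply Finset.prod_eq_one
    intro i _
    simp only [Matrix.submatrix_apply, Amat, Fin.val_succ, Fin.val_castSucc]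
    have := HhZ_nat_sub ((i : ℕ) + 1) ((i : ℕ) + 1) le_rfl
    push_cast at this ⊢
    rw [this]
    simp [Hh]
  · intro i j hij
    have hij : (j : ℕ) < i := hij
    simp only [Matrix.submatrix_apply, Amat, Fin.val_succ, Fin.val_castSucc]
    have := HhZ_neg ((j : ℕ) + 1) ((i : ℕ) + 1) (by omega)
    push_cast at this ⊢
    rw [this]
    split_ifs <;> first | rfl | omega

theorem stmt3 {m : ℕ} (hm : 0 < m) (d : ℕ) (hd : 1 ≤ d) :
    gmk m (Ee d) = gmk m (Amat m d).det := by
  obtain ⟨n, rfl⟩ : ∃ n, d = n + 1 := ⟨d - 1, by omega⟩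
  set A := Amat m (n + 1) with hA
  let v : Fin (n + 1) → SymR := fun i => (-1 : SymR) ^ (i : ℕ) * Ee i
  have h1 : Matrix.vecMul (Matrix.vecMul v A) A.adjugate = A.det • v := by
    rw [Matrix.vecMul_vecMul, Matrix.mul_adjugate, Matrix.vecMul_smul, Matrix.vecMul_one]
  have h2 := congrFun h1 0
  have h3 : A.det = ∑ j, (∑ i, v i * A i j) * A.adjugate j 0 := by
    have : v 0 = 1 := by simp [v, Ee]
    rw [Pi.smul_apply, this, smul_eq_mul, mul_one] at h2
    rw [← h2]; rfl
  have h4 : A.adjugate (Fin.last n) 0 = (-1) ^ n := by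
    rw [Matrix.adjugate_fin_succ_eq_det_submatrix]
    have := minor_det m n
    simp only [Fin.succAbove_last, Fin.val_last, Fin.val_zero]
    rw [show (Fin.succAbove (0 : Fin (n + 1))) = Fin.succ from by
      ext; simp]
    rw [← hA] at this
    rw [this]; simp
  rw [h3, map_sum]
  simp_rw [map_mul, v, hA, col_sum]
  rw [Finset.sum_eq_single (Fin.last n)]
  · rw [if_pos rfl, ← hA, h4, ← map_mul]
    congr 1
    have : ((-1 : SymR) ^ n) * (-1) ^ n = 1 := by rw [← mul_pow]; simp
    linear_combination (-Ee (n + 1)) * this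
  · intro j _ hj
    rw [if_neg hj, zero_mul]
  · simp
end
end

section
/- Let m be a positive integer, let μ be a partition with |μ| = n ≥ 1, and let r ≥ 0 be an integer. In the polynomial ring R = ℤ[h_1, h_2, ..., e_1, e_2, ...], the coefficient of the monomial h_{μ_1}···h_{μ_{ℓ(μ)}}·e_{rm} in det(A_{n+rm}) equals the coefficient of the monomial h_{μ_1}···h_{μ_{ℓ(μ)}} in det(A_n). (For r = 0 both quantities coincide by definition.) -/
noncomputable section

open MvPolynomial

/-- The exponent vector of the monomial `h_{μ_1} ⋯ h_{μ_ℓ} ⋅ e_t` (with no `e`-factor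
when `t = 0`, since `e_0 = 1`). -/
def expVec (μ : List ℕ) (t : ℕ) : (ℕ ⊕ ℕ) →₀ ℕ :=
  Multiset.toFinsupp
    (((μ.map (Sum.inl : ℕ → ℕ ⊕ ℕ) : Multiset (ℕ ⊕ ℕ)) + if t = 0 then 0 else {Sum.inr t}))

/-- entries of the matrix as a function on naturals -/
def aent (m : ℕ) (i j : ℕ) : SymR :=
  if ¬ m ∣ (j + 1) then HhZ (1 - ((i : ℕ) + 1 : ℤ) + ((j : ℕ) + 1 : ℤ))
  else if i + 1 = 1 then (-1 : SymR) ^ ((j + 1) + 1) * Ee (j + 1)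
  else if i + 1 = (j + 1) + 1 then 1
  else 0

theorem Amat_apply (m d : ℕ) (i j : Fin d) : Amat m d i j = aent m i j := rfl

theorem aent_sub (m j : ℕ) : aent m (j+1) j = 1 := by
  unfold aent
  split_ifs <;> simp_all [HhZ, Hh]

theorem aent_low (m i j : ℕ) (h : j + 1 < i) : aent m i j = 0 := by
  unfold aent
  split_ifs with h1 h2 h3
  · omega
  · omega
  · rfl
  · unfold HhZ
    rw [if_pos (by omega)]

def DD (m : ℕ) : ℕ → SymR
  | 0 => 1
  | (j+1) => ∑ i : Fin (j+1), (-1)^(j + (i:ℕ)) * aent m i j * DD m i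
termination_by k => k
decreasing_by exact i.2

theorem DD_zero (m : ℕ) : DD m 0 = 1 := by rw [DD]

theorem DD_succ (m j : ℕ) :
    DD m (j+1) = ∑ i ∈ Finset.range (j+1), (-1)^(j + i) * aent m i j * DD m i := by
  rw [DD, Finset.sum_range]

theorem row_sum (m j : ℕ) :
    ∑ i ∈ Finset.range (j+1), (-1)^i * DD m i * aent m i j = (-1)^j * DD m (j+1) := by
  rw [DD_succ, Finset.mul_sum]
  refine Finset.sum_congr rfl fun i _ => ?_
  rw [pow_add]
  have : ((-1 : SymR)^j) * (-1)^j = 1 := by rw [← mul_pow]; simp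
  linear_combination (-(-1)^i * aent m i j * DD m i) * this

theorem row_sum' (m d j : ℕ) (h : j < d) :
    ∑ i ∈ Finset.range (d+1), (-1)^i * DD m i * aent m i j = 0 := by
  obtain ⟨k, rfl⟩ := Nat.exists_eq_add_of_lt h
  have : ∑ i ∈ Finset.range (j+2), (-1)^i * DD m i * aent m i j = 0 := by
    rw [Finset.sum_range_succ, row_sum, aent_sub]; ring
  rw [← this]
  symm
  apply Finset.sum_subset
  · intro x; simp; omega
  · intro x _ hx
    rw [aent_low, mul_zero]
    simp at hx; omega

theorem det_eq_DD (m d : ℕ) : (Amat m d).det = DD m d := by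
  cases d with
  | zero => simp [DD_zero]
  | succ d =>
    have h := Matrix.det_updateRow_sum (Amat m (d+1)) 0 (fun i => (-1)^(i:ℕ) * DD m i)
    simp only [Fin.val_zero, pow_zero, DD_zero, one_mul, one_smul] at h
    rw [← h]
    have hrow : ∀ j : Fin (d+1), (∑ k : Fin (d+1), ((-1)^(k:ℕ) * DD m k) • Amat m (d+1) k) j
        = ∑ i ∈ Finset.range (d+1), (-1)^i * DD m i * aent m i j := by
      intro j
      rw [Finset.sum_apply, Finset.sum_range]
      rfl
    rw [Matrix.det_succ_row_zero, Finset.sum_eq_single (Fin.last d)]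
    · rw [Matrix.updateRow_self, hrow, Fin.val_last, row_sum]
      have h1 : (((Amat m (d+1)).updateRow 0
          (∑ k : Fin (d+1), ((-1)^(k:ℕ) * DD m k) • Amat m (d+1) k)).submatrix Fin.succ
            (Fin.last d).succAbove).det = 1 := by
        rw [Matrix.det_of_upperTriangular]
        · apply Finset.prod_eq_one
          intro i _
          simp [Matrix.updateRow_ne, Amat_apply, aent_sub]
        · intro i j hij
          have : (j : ℕ) < i := hij
          simp [Matrix.updateRow_ne, Amat_apply]
          exact aent_low _ _ _ (by omega)
      rw [h1, mul_one, ← mul_assoc, ← mul_pow]; simp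
    · intro j _ hj
      rw [Matrix.updateRow_self, hrow, row_sum']
      · ring
      · have := Fin.val_lt_last hj
        simpa using this
    · simp

theorem DD_dvd (m d : ℕ) (hd : m ∣ d) : DD m d = Ee d := by
  cases d with
  | zero => simp [DD_zero, Ee]
  | succ j =>
    rw [DD_succ, Finset.sum_eq_single 0]
    · simp only [aent, hd, DD_zero]
      simp only [not_true, if_false, zero_add, if_true, add_zero, mul_one]
      rw [← mul_assoc, ← pow_add, Even.neg_one_pow ⟨j+1, by ring⟩, one_mul]
    · intro i hi h0
      simp at hi
      have : aent m i j = 0 := by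
        simp only [aent, hd]
        simp [h0]; omega
      rw [this]; ring
    · simp

theorem DD_ndvd (m d : ℕ) (hd : ¬ m ∣ d) :
    DD m d = ∑ i ∈ Finset.range d, (-1)^i * (X (Sum.inl (i+1)) * DD m (d - (i+1))) := by
  cases d with
  | zero => simp at hd
  | succ j =>
    rw [DD_succ, ← Finset.sum_range_reflect]
    refine Finset.sum_congr rfl fun i hi => ?_
    simp at hi
    have h1 : j + 1 - 1 - i = j - i := by omega
    have h2 : j + 1 - (i + 1) = j - i := by omega
    have h3 : aent m (j - i) j = X (Sum.inl (i+1)) := by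
      unfold aent
      rw [if_pos hd]
      unfold HhZ
      rw [if_neg (by omega)]
      have : (1 - (((j - i : ℕ) : ℤ) + 1) + ((j : ℤ) + 1)).toNat = i + 1 := by omega
      rw [this]; simp [Hh]
    have h4 : (-1 : SymR) ^ (j + (j - i)) = (-1)^i := by
      have : j + (j - i) = i + 2 * (j - i) := by omega
      rw [this, pow_add, pow_mul]; simp
    rw [h1, h2, h3, h4]; ring

theorem coeff_sgn (i : ℕ) (u : (ℕ ⊕ ℕ) →₀ ℕ) (p : SymR) :
    coeff u ((-1)^i * p) = (-1)^i * coeff u p := by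
  rcases neg_one_pow_eq_or SymR i with h | h <;>
  rcases Nat.even_or_odd i with h' | h' <;>
  simp [h'.neg_one_pow]

theorem vanish (m t : ℕ) (k : ℕ) : k < t → ∀ u : (ℕ ⊕ ℕ) →₀ ℕ, u (Sum.inr t) ≠ 0 →
    coeff u (DD m k) = 0 := by
  induction k using Nat.strong_induction_on with
  | _ k ih =>
    intro hk u hu
    by_cases hd : m ∣ k
    · rw [DD_dvd _ _ hd, Ee]
      split_ifs
      · rw [coeff_one, if_neg]
        rintro rfl; simp at hu
      · rw [coeff_X', if_neg]
        rintro rfl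
        apply hu
        rw [Finsupp.single_apply, if_neg]
        simp; omega
    · rw [DD_ndvd _ _ hd, coeff_sum]
      apply Finset.sum_eq_zero
      intro i hi
      simp at hi
      rw [coeff_sgn, coeff_X_mul']
      split_ifs
      · rw [ih _ (by omega) (by omega), mul_zero]
        simpa using hu
      · simp

theorem key (m t : ℕ) (ht : 0 < t) (hmt : m ∣ t) (n : ℕ) : ∀ s : (ℕ ⊕ ℕ) →₀ ℕ,
    (∀ j, s (Sum.inr j) = 0) →
    coeff (s + Finsupp.single (Sum.inr t) 1) (DD m (n + t)) = coeff s (DD m n) := by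
  induction n using Nat.strong_induction_on with
  | _ n ih =>
    intro s hs
    by_cases hd : m ∣ n
    · rw [DD_dvd _ _ hd, DD_dvd _ _ (Dvd.dvd.add hd hmt), Ee, Ee, if_neg (by omega), coeff_X']
      split_ifs with h1 h2 h2
      · have h3 : n = 0 := h2
        subst h3
        have : s = 0 := by
          have := h1
          rw [zero_add] at this
          exact left_eq_add.mp (this.trans (add_comm _ _)) |> fun h => by simpa using h
        simp [this]
      · exfalso
        have := DFunLike.congr_fun h1 (Sum.inr t)
        simp [hs, Finsupp.single_apply] at this
        omega
      · subst h2
        rw [coeff_one, if_neg]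
        rintro rfl
        simp at h1
      · rw [coeff_X', if_neg]
        rintro rfl
        have := hs n
        simp at this
    · rw [DD_ndvd _ _ hd, DD_ndvd _ (n+t) (by rwa [Nat.dvd_add_left hmt]), coeff_sum, coeff_sum,
        Finset.sum_range_add]
      have h0 : ∀ i ∈ Finset.range t, coeff (s + Finsupp.single (Sum.inr t) 1)
          ((-1)^(n+i) * (X (Sum.inl (n+i+1)) * DD m (n + t - (n+i+1))) : SymR) = 0 := by
        intro i hi
        simp at hi
        rw [coeff_sgn, coeff_X_mul']
        split_ifs
        · rw [vanish m t _ (by omega), mul_zero]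
          simp
        · simp
      rw [Finset.sum_eq_zero h0, add_zero]
      refine Finset.sum_congr rfl fun i hi => ?_
      simp at hi
      rw [coeff_sgn, coeff_sgn, coeff_X_mul', coeff_X_mul']
      congr 1
      have e1 : (Sum.inl (i+1) ∈ (s + Finsupp.single (Sum.inr t) 1 : (ℕ ⊕ ℕ) →₀ ℕ).support) ↔
        (Sum.inl (i+1) ∈ s.support) := by simp
      by_cases hsup : (Sum.inl (i+1) : ℕ ⊕ ℕ) ∈ s.support
      · rw [if_pos (e1.2 hsup), if_pos hsup, ← ih (n - (i+1)) (by omega)]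
        · congr 1
          · ext x
            rcases x with x | x <;> simp
          · congr 1; omega
        · intro j; simp [hs]
      · rw [if_neg (fun h => hsup (e1.1 h)), if_neg hsup]

theorem stmt4 {m : ℕ} (hm : 0 < m) (n : ℕ) (hn : 1 ≤ n) (μ : List ℕ)
    (hμ : IsPartitionL μ) (hμn : μ.sum = n) (r : ℕ) :
    MvPolynomial.coeff (expVec μ (r * m)) (Amat m (n + r * m)).det =
      MvPolynomial.coeff (expVec μ 0) (Amat m n).det := by
  rcases Nat.eq_zero_or_pos r with rfl | hr
  · rw [det_eq_DD, det_eq_DD]; simp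
  · have ht : 0 < r * m := Nat.mul_pos hr hm
    rw [det_eq_DD, det_eq_DD, ← key m (r*m) ht (Dvd.intro_left r rfl) n (expVec μ 0)]
    · congr 1
      unfold expVec
      rw [if_neg ht.ne', if_pos rfl, add_zero, map_add, Multiset.toFinsupp_singleton]
    · intro j
      simp [expVec]
end
end

section
/- Let m be a positive integer and λ a partition. Then c_λ = ∑ c_δ · c_μ^(m), where the sum runs over all pairs (δ, μ) of partitions (δ and μ possibly empty) such that the multiset of all parts of δ and μ together equals the multiset of parts of λ and m divides |δ|. -/
noncomputable section

def GoodM (m : ℕ) (δ : List ℕ) : Prop := ∀ j < δ.length, ¬ m ∣ (δ.take (j + 1)).sum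

theorem exists_split (m : ℕ) : ∀ (n : ℕ) (x : List ℕ), x.length = n →
    ∃ b g : List ℕ, b ++ g = x ∧ m ∣ b.sum ∧ GoodM m g := by
  intro n
  induction n using Nat.strong_induction_on with
  | _ n ih =>
    intro x hx
    by_cases h : GoodM m x
    · exact ⟨[], x, by simp, by simp, h⟩
    · unfold GoodM at h
      push Not at h
      obtain ⟨j, hj, hd⟩ := h
      obtain ⟨b, g, hbg, hb, hg⟩ := ih (x.drop (j+1)).length (by simp; omega) _ rfl
      refine ⟨x.take (j+1) ++ b, g, ?_, ?_, hg⟩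
      · rw [List.append_assoc, hbg, List.take_append_drop]
      · rw [List.sum_append]; exact dvd_add hd hb

theorem good_aux {m : ℕ} {b a g : List ℕ} (hb : m ∣ b.sum) (hba : m ∣ (b ++ a).sum)
    (hg : GoodM m (a ++ g)) : a = [] := by
  by_contra ha
  have hl : 0 < a.length := List.length_pos_iff.mpr ha
  apply hg (a.length - 1) (by simp; omega)
  have : a.length - 1 + 1 = a.length := by omega
  rw [this, List.take_left]
  rw [List.sum_append] at hba
  exact (Nat.dvd_add_right hb).mp hba

theorem split_unique {m : ℕ} {b g b' g' : List ℕ} (h : b ++ g = b' ++ g')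
    (hb : m ∣ b.sum) (hb' : m ∣ b'.sum) (hg : GoodM m g) (hg' : GoodM m g') :
    b = b' ∧ g = g' := by
  rcases List.append_eq_append_iff.mp h with ⟨a, rfl, rfl⟩ | ⟨a, rfl, rfl⟩
  · have := good_aux hb hb' hg
    subst this; simp
  · have := good_aux hb' hb hg'
    subst this; simp

theorem part_eq {a b : List ℕ} (ha : IsPartitionL a) (hb : IsPartitionL b) (h : a.Perm b) :
    a = b := by
  refine List.Perm.eq_of_pairwise ?_ ha.1 hb.1 h
  intro x y _ _ h1 h2
  exact le_antisymm h2 h1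

theorem exists_part (a : List ℕ) (h : ∀ x ∈ a, 0 < x) : ∃ p, IsPartitionL p ∧ a.Perm p := by
  refine ⟨a.mergeSort (fun x y => decide (x ≥ y)), ⟨?_, ?_⟩, (List.mergeSort_perm _ _).symm⟩
  · have := List.pairwise_mergeSort (le := fun x y : ℕ => decide (x ≥ y))
      (by intro a b c; simp; omega) (by intro a b; simp; omega) a
    simpa using this
  · intro x hx
    exact h x ((List.mergeSort_perm _ _).mem_iff.mp hx)

open Classical in
def CF (l : List ℕ) : Finset (List ℕ) := l.permutations.toFinset
open Classical in
def CFM (m : ℕ) (l : List ℕ) : Finset (List ℕ) := (CF l).filter (GoodM m)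

theorem mem_CF {l x : List ℕ} : x ∈ CF l ↔ x.Perm l := by simp [CF]

theorem numComp_eq (l : List ℕ) : numComp l = (CF l).card := by
  unfold numComp CF
  rw [List.card_toFinset]

theorem numCompM_eq_s8 (m : ℕ) (l : List ℕ) : numCompM m l = (CFM m l).card := by
  unfold numCompM
  rw [← List.toFinset_card_of_nodup ((List.nodup_dedup _).filter _)]
  congr 1
  ext x
  simp [CFM, CF, GoodM]

theorem stmt8 {m : ℕ} (hm : 0 < m) (lam : List ℕ) (hlam : IsPartitionL lam) :
    numComp lam =
      ∑ᶠ q ∈ {q : List ℕ × List ℕ | IsPartitionL q.1 ∧ IsPartitionL q.2 ∧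
          List.Perm (q.1 ++ q.2) lam ∧ m ∣ q.1.sum},
        numComp q.1 * numCompM m q.2 := by
  have hfin : {q : List ℕ × List ℕ | IsPartitionL q.1 ∧ IsPartitionL q.2 ∧
          List.Perm (q.1 ++ q.2) lam ∧ m ∣ q.1.sum}.Finite := by
    refine ((CF lam ×ˢ Finset.range (lam.length + 1)).finite_toSet.image
      (fun p => (p.1.take p.2, p.1.drop p.2))).subset ?_
    rintro ⟨a, b⟩ ⟨_, _, h, _⟩
    refine ⟨(a ++ b, a.length), ?_, by simp⟩
    have := h.length_eq
    simp only [List.length_append] at this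
    simp only [Finset.coe_product, Set.mem_prod, Finset.mem_coe, mem_CF, Finset.mem_range]
    exact ⟨h, by omega⟩
  rw [finsum_mem_eq_finite_toFinset_sum _ hfin, numComp_eq]
  simp only [numComp_eq, numCompM_eq_s8, ← Finset.card_product]
  rw [← Finset.card_sigma]
  symm
  refine Finset.card_bij (fun p _ => p.2.1 ++ p.2.2) ?_ ?_ ?_
  · rintro ⟨⟨d, u⟩, ⟨a, b⟩⟩ h
    simp only [Finset.mem_sigma, Set.Finite.mem_toFinset, Set.mem_setOf_eq, Finset.mem_product,
      mem_CF, CFM, Finset.mem_filter] at h ⊢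
    exact (h.2.1.append h.2.2.1).trans h.1.2.2.1
  · rintro ⟨⟨d, u⟩, ⟨a, b⟩⟩ h ⟨⟨d', u'⟩, ⟨a', b'⟩⟩ h' heq
    simp only [Finset.mem_sigma, Set.Finite.mem_toFinset, Set.mem_setOf_eq, Finset.mem_product,
      mem_CF, CFM, Finset.mem_filter] at h h' heq
    obtain ⟨⟨hd, hu, _, hs⟩, had, hbu, hg⟩ := h
    obtain ⟨⟨hd', hu', _, hs'⟩, had', hbu', hg'⟩ := h'
    obtain ⟨rfl, rfl⟩ := split_unique heq (by rwa [had.sum_eq]) (by rwa [had'.sum_eq]) hg hg'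
    obtain rfl := part_eq hd hd' (had.symm.trans had')
    obtain rfl := part_eq hu hu' (hbu.symm.trans hbu')
    rfl
  · intro x hx
    rw [mem_CF] at hx
    obtain ⟨b, g, rfl, hb, hg⟩ := exists_split m _ x rfl
    have hpos : ∀ y ∈ b ++ g, 0 < y := fun y hy => hlam.2 y (hx.mem_iff.mp hy)
    obtain ⟨d, hd, hbd⟩ := exists_part b (fun y hy => hpos y (by simp [hy]))
    obtain ⟨u, hu, hgu⟩ := exists_part g (fun y hy => hpos y (by simp [hy]))
    refine ⟨⟨(d, u), (b, g)⟩, ?_, rfl⟩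
    simp only [Finset.mem_sigma, Set.Finite.mem_toFinset, Set.mem_setOf_eq, Finset.mem_product,
      mem_CF, CFM, Finset.mem_filter]
    exact ⟨⟨hd, hu, (hbd.append hgu).symm.trans hx, by rwa [← hbd.sum_eq]⟩, hbd, hgu, hg⟩
end
end

section
/- Let m be a positive integer and β = (β_1,...,β_s) a composition. Write β_i = mη_i + r_i with integers 0 ≤ r_i ≤ m−1, let r = r_1 + ··· + r_s, and let μ be the partition obtained by arranging the nonzero values among η_1,...,η_s in weakly decreasing order. Then c^(m)_{β;((1^r), mμ)} = 1, where (1^r) denotes the partition with r parts equal to 1 (the empty partition if r = 0). -/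
noncomputable section

theorem aux_all (m : ℕ) (β : List ℕ) (L : List (List ℕ))
    (h : List.Forall₂ (fun b l => l = List.replicate l.length 1 ∧ b % m ≤ l.length) β L) :
    (β.map (· % m)).sum ≤ L.flatten.length ∧
    (L.flatten.length = (β.map (· % m)).sum → L = β.map fun b => List.replicate (b % m) 1) := by
  induction h with
  | nil => simp
  | @cons b l β L hh _ ih =>
    obtain ⟨h1, h2⟩ := hh
    obtain ⟨i1, i2⟩ := ih
    simp only [List.map_cons, List.sum_cons, List.flatten_cons, List.length_append]
    refine ⟨by omega, fun h => ?_⟩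
    rw [← i2 (by omega)]
    have : l.length = b % m := by omega
    rw [this] at h1
    rw [← h1]

theorem aux_num (m k : ℕ) (hk : k < m) : numCompM m (List.replicate k 1) = 1 := by
  unfold numCompM
  have h : (List.replicate k 1).permutations.dedup = [List.replicate k 1] := by
    have hn := List.nodup_dedup (List.replicate k 1).permutations
    have hmem : ∀ x, x ∈ (List.replicate k 1).permutations.dedup ↔ x = List.replicate k 1 := by
      intro x
      rw [List.mem_dedup, List.mem_permutations, List.perm_replicate]
    refine List.perm_singleton.1 ?_
    rw [List.perm_ext_iff_of_nodup hn (List.nodup_singleton _)]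
    intro a
    rw [hmem]; simp
  rw [h, List.filter_cons_of_pos]
  · simp
  · simp only [decide_eq_true_eq, List.length_replicate, List.take_replicate, List.sum_replicate]
    intro j hj hd
    have := Nat.le_of_dvd (by simp; omega) hd
    simp at this
    omega

theorem aux_V {m : ℕ} (hm : 0 < m) (β : List ℕ)
    (r : ℕ) (hr : r = (β.map (· % m)).sum)
    (μ : List ℕ)
    (hμ : List.Perm μ ((β.map (· / m)).filter fun x => decide (x ≠ 0))) (L : List (List ℕ)) :
    Vmem m β (List.replicate r 1) μ L ↔ L = β.map fun b => List.replicate (b % m) 1 := by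
  constructor
  · rintro ⟨h1, h2, h3, -⟩
    have hlen : L.flatten.length = r := by simpa using h3.length_eq
    refine (aux_all m β L ?_).2 (hlen.trans hr)
    rw [List.forall₂_iff_get]
    refine ⟨h1.symm, fun i hi hi' => ?_⟩
    have := h2 i hi
    rw [List.getD_eq_getElem _ _ hi, List.getD_eq_getElem _ _ hi'] at this
    obtain ⟨-, hle, hd⟩ := this
    have hrep : L[i] = List.replicate L[i].length 1 := by
      rw [List.eq_replicate_iff]
      refine ⟨rfl, fun b hb => ?_⟩
      have : b ∈ L.flatten := List.mem_flatten.2 ⟨_, List.getElem_mem hi', hb⟩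
      exact (List.mem_replicate.1 (h3.subset this)).2
    refine ⟨hrep, ?_⟩
    have hs : L[i].sum = L[i].length := by
      conv_lhs => rw [hrep]
      simp
    rw [hs] at hle hd
    have hmod : L[i].length % m = β[i] % m := (Nat.modEq_iff_dvd' hle).2 hd
    show β[i] % m ≤ L[i].length
    rw [← hmod]
    exact Nat.mod_le _ _
  · rintro rfl
    have hg : ∀ i < β.length, β.getD i 0 - ((β.map fun b => List.replicate (b % m) 1).getD i []).sum
        = m * (β.getD i 0 / m) := by
      intro i hi
      rw [List.getD_eq_getElem _ _ hi, List.getD_eq_getElem _ _ (by simpa using hi)]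
      simp only [List.getElem_map, List.sum_replicate, smul_eq_mul, mul_one]
      have := Nat.mod_add_div β[i] m
      omega
    refine ⟨by simp, fun i hi => ⟨⟨?_, ?_⟩, ?_, ?_⟩, ?_, ?_⟩
    · rw [List.getD_eq_getElem _ _ (by simpa using hi)]
      simp [List.pairwise_replicate]
    · rw [List.getD_eq_getElem _ _ (by simpa using hi)]
      simp
    · rw [List.getD_eq_getElem _ _ hi, List.getD_eq_getElem _ _ (by simpa using hi)]
      simp [Nat.mod_le]
    · rw [hg i hi]; exact dvd_mul_right _ _
    · rw [List.perm_replicate, List.eq_replicate_iff]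
      refine ⟨?_, ?_⟩
      · rw [hr, List.length_flatten, List.map_map]
        congr 1
        apply List.map_congr_left
        simp
      · intro b hb
        simp only [List.mem_flatten, List.mem_map] at hb
        obtain ⟨_, ⟨a, -, rfl⟩, hb⟩ := hb
        exact (List.mem_replicate.1 hb).2
    · refine List.Perm.trans (List.Perm.of_eq ?_) (hμ.map _).symm
      have : ((List.range β.length).map fun i => β.getD i 0 -
          ((β.map fun b => List.replicate (b % m) 1).getD i []).sum)
          = (β.map (· / m)).map (m * ·) := by
        apply List.ext_getElem
        · simp
        · intro i h1 h2
          have hi : i < β.length := by simpa using h1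
          rw [List.getElem_map, List.getElem_range, hg i hi, List.getD_eq_getElem _ _ hi]
          simp
      rw [this, List.filter_map]
      congr 1
      apply List.filter_congr
      intro x _
      simp [hm.ne']

theorem stmt9 {m : ℕ} (hm : 0 < m) (β : List ℕ) (hβ : ∀ x ∈ β, 0 < x)
    (r : ℕ) (hr : r = (β.map (· % m)).sum)
    (μ : List ℕ) (hμs : μ.Pairwise (· ≥ ·))
    (hμ : List.Perm μ ((β.map (· / m)).filter fun x => decide (x ≠ 0))) :
    cB m β (List.replicate r 1) μ = 1 := by
  unfold cB
  have hset : {L : List (List ℕ) | Vmem m β (List.replicate r 1) μ L}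
      = {β.map fun b => List.replicate (b % m) 1} := by
    ext L
    exact aux_V hm β r hr μ hμ L
  rw [hset, finsum_mem_singleton]
  apply Finset.prod_eq_one
  intro i hi
  have hi : i < β.length := Finset.mem_range.1 hi
  rw [List.getD_eq_getElem _ _ (by simpa using hi), List.getElem_map,
    aux_num m _ (Nat.mod_lt _ hm)]
  simp [epsL]
end
end
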